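/- Let 1 < q < r be real numbers with ⌈q⌉ = ⌈r⌉ and suppose q ∉ closure(U). Then the set W_r = {x ∈ U_r : the unique expansion of x in base r, regarded as a digit sequence, belongs to U_q'} is a closed subset of ℝ. -/

import Mathlib

/-!
The set in question is the image, under the evaluation map in base `r`, of the set of univoque
sequences in base `q`: with equal digit sets a univoque sequence in base `q` remains univoque in
the larger base `r`. The evaluation map is continuous on sequences with digits in `{0, …, m}`,
`m = ⌈q⌉ - 1`, so by compactness it suffices that the univoque sequences in base `q` form a closed
set in the product topology.

A sequence is univoque exactly when each tail following a digit `< m` has value `< 1`, and each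
reflected tail (digits `m - c_i`) following a nonzero digit has value `< 1` (`mem_USeq_iff`). A limit
`c` of univoque sequences satisfies these conditions with `≤`. Suppose strictness fails; up to
reflection, some tail `d` of `c` following a digit `< m` has value exactly `1`. If moreover a
reflected tail of `d` following a nonzero digit had value `1`, then the univoque sequences close to
`c` would violate one of their two conditions. Hence the reflected conditions on `d` are strict
(`Close.quasi`), and it remains to see that then `q` is in the closure of the univoque bases
(`Quasi.mem_closure`).

If all conditions on `d` are strict, `q` itself is univoque. Otherwise `d` is periodic, no tail of
`d` exceeds `d` lexicographically, and each reflected tail falls below `d` within a bounded number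
of digits (`Quasi.uniform`). There are arbitrarily long prefixes of `d` for which this drop always
happens before the end of the prefix (`exists_cut`). For two such prefixes `C` and `A`, with `A`
much longer than `C`, the sequence `A (C̄ C)^∞` is lexicographically larger than its proper tails
and all its reflected tails (`glue_lt`), so it is the unique expansion of `1` in the base where it
has value `1`. As the length of `A` grows these bases tend to `q`.
-/

noncomputable section

/-- The largest integer smaller than `q`, as a natural number (for `q > 1` this is `⌈q⌉ - 1`). -/
def topDigit (q : ℝ) : ℕ := ⌈q⌉.toNat - 1

/-- Greedy digit associated to a remainder `y` : the largest nonnegative integer `b` with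
`b < q` and `b ≤ q * y`. -/
def gDigit (q y : ℝ) : ℕ := min (topDigit q) ⌊q * y⌋₊

/-- Remainders of the greedy algorithm in base `q` starting from `x`. -/
def gRem (q x : ℝ) : ℕ → ℝ
  | 0 => x
  | n + 1 => q * gRem q x n - gDigit q (gRem q x n)

/-- The greedy expansion of `x` in base `q`, `0`-indexed: `greedy q x n` is the digit `b_{n+1}`,
i.e. the largest integer smaller than `q` such that `∑_{i ≤ n} (greedy q x i) / q^(i+1) ≤ x`. -/
def greedy (q x : ℝ) (n : ℕ) : ℕ := gDigit q (gRem q x n)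

/-- Quasi-greedy digit associated to a remainder `y` : the largest nonnegative integer `b` with
`b < q` and `b < q * y` (it is `0` when no such integer exists, matching the convention that the
quasi-greedy expansion of `0` is `0^∞`). -/
def qgDigit (q y : ℝ) : ℕ := min (topDigit q) (⌈q * y⌉.toNat - 1)

/-- Remainders of the quasi-greedy algorithm in base `q` starting from `x`. -/
def qgRem (q x : ℝ) : ℕ → ℝ
  | 0 => x
  | n + 1 => q * qgRem q x n - qgDigit q (qgRem q x n)

/-- The quasi-greedy expansion of `x` in base `q`, `0`-indexed: `quasiGreedy q x n` is the digit
`a_{n+1}`, i.e. the largest integer smaller than `q` with `∑_{i ≤ n} (quasiGreedy q x i) / q^(i+1) < x`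
(with the convention `quasiGreedy q 0 = 0^∞`). -/
def quasiGreedy (q x : ℝ) (n : ℕ) : ℕ := qgDigit q (qgRem q x n)

/-- `alphaSeq q` is the quasi-greedy expansion of `1` in base `q` (`0`-indexed:
`alphaSeq q (i-1) = α_i(q)`). -/
def alphaSeq (q : ℝ) : ℕ → ℕ := quasiGreedy q 1

/-- Strict lexicographic order on digit sequences. -/
def lexLt (a b : ℕ → ℕ) : Prop := ∃ n, (∀ i, i < n → a i = b i) ∧ a n < b n

/-- Lexicographic order on digit sequences. -/
def lexLe (a b : ℕ → ℕ) : Prop := lexLt a b ∨ a = b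

/-- `c` is an expansion of `x` in base `q`: the digits are nonnegative integers smaller than `q`
and `x = ∑_{i≥0} c_i / q^(i+1)`. -/
def IsExpansion (q : ℝ) (c : ℕ → ℕ) (x : ℝ) : Prop :=
  (∀ i, (c i : ℝ) < q) ∧ x = ∑' i : ℕ, (c i : ℝ) / q ^ (i + 1)

/-- The interval `J_q = [0, (⌈q⌉-1)/(q-1)]` of numbers having an expansion in base `q`. -/
def Jset (q : ℝ) : Set ℝ := Set.Icc 0 (((⌈q⌉ : ℝ) - 1) / (q - 1))

/-- `USet q` is the set `𝒰_q` of numbers `x ∈ J_q` having a unique expansion in base `q`. -/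
def USet (q : ℝ) : Set ℝ := {x | x ∈ Jset q ∧ ∃! c, IsExpansion q c x}

/-- `USeq q` is the set `𝒰_q'` of univoque sequences in base `q`, i.e. sequences that are the
unique expansion in base `q` of some number. -/
def USeq (q : ℝ) : Set (ℕ → ℕ) :=
  {c | ∃ x, IsExpansion q c x ∧ ∀ c', IsExpansion q c' x → c' = c}

/-- The set `𝒰` of univoque bases: `q > 1` such that `1` has a unique expansion in base `q`. -/
def UnivBases : Set ℝ := {q | 1 < q ∧ ∃! c, IsExpansion q c 1}

/-- The set `𝒱_q`: numbers `x ∈ J_q` whose quasi-greedy expansion `(a_i)` satisfies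
`overline{a_{n+1} a_{n+2} …} ≤ α_1 α_2 …` whenever `a_n > 0`. -/
def VSet (q : ℝ) : Set ℝ :=
  {x | x ∈ Jset q ∧ ∀ n, 0 < quasiGreedy q x n →
    lexLe (fun i => topDigit q - quasiGreedy q x (n + 1 + i)) (alphaSeq q)}

/-- `VSeq q` is the set `𝒱_q'` of quasi-greedy expansions of elements of `𝒱_q`. -/
def VSeq (q : ℝ) : Set (ℕ → ℕ) := (fun x => quasiGreedy q x) '' VSet q

/-- The set `𝒱` of bases `q > 1` with `overline{α_{k+1} α_{k+2} …} ≤ α_1 α_2 …` for all `k ≥ 1`. -/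
def VBases : Set ℝ :=
  {q | 1 < q ∧ ∀ k, 1 ≤ k → lexLe (fun i => topDigit q - alphaSeq q (k + i)) (alphaSeq q)}

/-- A digit sequence is infinite if it has infinitely many nonzero terms. -/
def InfiniteSeq (c : ℕ → ℕ) : Prop := ∀ N, ∃ i, N ≤ i ∧ c i ≠ 0

/-- A digit sequence is ultimately periodic if some tail of it is periodic. -/
def UltimatelyPeriodic (c : ℕ → ℕ) : Prop := ∃ n p, 0 < p ∧ ∀ i, n ≤ i → c (i + p) = c i

end

/-! ### Values of digit sequences -/

/-- The value `∑ c_i / Q^(i+1)` of a digit sequence in base `Q`. -/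
noncomputable def val (Q : ℝ) (c : ℕ → ℕ) : ℝ := ∑' i : ℕ, (c i : ℝ) / Q ^ (i + 1)

/-- The sequence with its first `k` digits dropped. -/
def sh (k : ℕ) (c : ℕ → ℕ) : ℕ → ℕ := fun i => c (k + i)

/-- The reflection `i ↦ m - c_i` of a sequence with digits in `{0, …, m}`. -/
def cj (m : ℕ) (c : ℕ → ℕ) : ℕ → ℕ := fun i => m - c i

lemma sh_sh (a b : ℕ) (c : ℕ → ℕ) : sh a (sh b c) = sh (b + a) c := by
  funext i; simp [sh, add_assoc]

lemma sh_le {m : ℕ} {c : ℕ → ℕ} (h : ∀ i, c i ≤ m) (k : ℕ) : ∀ i, sh k c i ≤ m := fun _ => h _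

lemma cj_le (m : ℕ) (c : ℕ → ℕ) : ∀ i, cj m c i ≤ m := fun _ => Nat.sub_le _ _

lemma cj_cj {m : ℕ} {c : ℕ → ℕ} (h : ∀ i, c i ≤ m) : cj m (cj m c) = c := by
  funext i; have := h i; simp only [cj]; omega

lemma hasSum_top {Q : ℝ} (hQ : 1 < Q) (m : ℕ) :
    HasSum (fun i : ℕ => (m : ℝ) / Q ^ (i + 1)) (m / (Q - 1)) := by
  have h0 : (0 : ℝ) < Q := by linarith
  have h := (hasSum_geometric_of_lt_one (inv_nonneg.2 h0.le) (inv_lt_one_of_one_lt₀ hQ)).mul_left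
    ((m : ℝ) / Q)
  have h1 : Q - 1 ≠ 0 := by linarith
  have e1 : (fun i : ℕ => (m : ℝ) / Q ^ (i + 1)) = fun i : ℕ => (m : ℝ) / Q * Q⁻¹ ^ i := by
    funext i; rw [pow_succ, inv_pow]; field_simp
  have e2 : (m : ℝ) / (Q - 1) = m / Q * (1 - Q⁻¹)⁻¹ := by
    have : 1 - Q⁻¹ = (Q - 1) / Q := by field_simp
    rw [this]; field_simp
  rw [e1, e2]
  exact h

lemma val_summable {Q : ℝ} (hQ : 1 < Q) {m : ℕ} {c : ℕ → ℕ} (h : ∀ i, c i ≤ m) :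
    Summable (fun i : ℕ => (c i : ℝ) / Q ^ (i + 1)) := by
  have h0 : (0 : ℝ) < Q := by linarith
  refine Summable.of_nonneg_of_le (fun i => by positivity) (fun i => ?_) (hasSum_top hQ m).summable
  have : (c i : ℝ) ≤ m := by exact_mod_cast h i
  gcongr

lemma val_nonneg {Q : ℝ} (hQ : 1 < Q) (c : ℕ → ℕ) : 0 ≤ val Q c := by
  have h0 : (0 : ℝ) < Q := by linarith
  exact tsum_nonneg fun i => by positivity

lemma val_cj {Q : ℝ} (hQ : 1 < Q) {m : ℕ} {c : ℕ → ℕ} (h : ∀ i, c i ≤ m) :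
    val Q (cj m c) = m / (Q - 1) - val Q c := by
  have := ((hasSum_top hQ m).sub (val_summable hQ h).hasSum).tsum_eq
  rw [val, val, ← this]
  refine tsum_congr fun i => ?_
  simp only [cj]
  rw [Nat.cast_sub (h i)]; ring

lemma val_le {Q : ℝ} (hQ : 1 < Q) {m : ℕ} {c : ℕ → ℕ} (h : ∀ i, c i ≤ m) :
    val Q c ≤ m / (Q - 1) := by
  have := val_cj hQ h
  have := val_nonneg hQ (cj m c)
  linarith

lemma val_pos {Q : ℝ} (hQ : 1 < Q) {m : ℕ} {c : ℕ → ℕ} (h : ∀ i, c i ≤ m) {i : ℕ}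
    (hi : 0 < c i) : 0 < val Q c := by
  have h0 : (0 : ℝ) < Q := by linarith
  refine (val_summable hQ h).tsum_pos (fun i => by positivity) i ?_
  have : (0 : ℝ) < c i := by exact_mod_cast hi
  positivity

lemma val_split {Q : ℝ} (hQ : 1 < Q) {m : ℕ} {c : ℕ → ℕ} (h : ∀ i, c i ≤ m) (n : ℕ) :
    val Q c = ∑ i ∈ Finset.range n, (c i : ℝ) / Q ^ (i + 1) + val Q (sh n c) / Q ^ n := by
  have h0 : (0 : ℝ) < Q := by linarith
  rw [val, ← (val_summable hQ h).sum_add_tsum_nat_add n, val, ← tsum_div_const]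
  congr 1
  refine tsum_congr fun i => ?_
  simp only [sh]
  rw [add_comm n i, div_div]; congr 1; ring

/-- Comparison of the values of two sequences agreeing before position `n`. -/
lemma val_diff {Q : ℝ} (hQ : 1 < Q) {m : ℕ} {a b : ℕ → ℕ} (ha : ∀ i, a i ≤ m)
    (hb : ∀ i, b i ≤ m) (n : ℕ) (hab : ∀ i, i < n → a i = b i) :
    (val Q a - val Q b) * Q ^ (n + 1) =
      (a n : ℝ) - b n + val Q (sh (n + 1) a) - val Q (sh (n + 1) b) := by
  have h0 : (0 : ℝ) < Q := by linarith
  rw [val_split hQ ha (n + 1), val_split hQ hb (n + 1), Finset.sum_range_succ,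
    Finset.sum_range_succ, Finset.sum_congr rfl (fun i hi => by rw [hab i (Finset.mem_range.1 hi)])]
  field_simp
  ring

lemma lexLt_or {a b : ℕ → ℕ} (h : a ≠ b) : lexLt a b ∨ lexLt b a := by
  classical
  have h' : ∃ n, a n ≠ b n := Function.ne_iff.1 h
  have h1 := Nat.find_spec h'
  have h2 : ∀ i, i < Nat.find h' → a i = b i := fun i hi => not_not.1 (Nat.find_min h' hi)
  rcases lt_or_gt_of_ne h1 with h3 | h3
  · exact Or.inl ⟨_, h2, h3⟩
  · exact Or.inr ⟨_, fun i hi => (h2 i hi).symm, h3⟩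

lemma not_lexLt_self (a : ℕ → ℕ) : ¬ lexLt a a := fun ⟨_, _, h⟩ => lt_irrefl _ h

lemma lexLt_trans {a b c : ℕ → ℕ} (h1 : lexLt a b) (h2 : lexLt b c) : lexLt a c := by
  obtain ⟨n, hn, hn'⟩ := h1
  obtain ⟨k, hk, hk'⟩ := h2
  rcases lt_trichotomy n k with h | h | h
  · exact ⟨n, fun i hi => (hn i hi).trans (hk i (hi.trans h)), by rw [← hk n h]; exact hn'⟩
  · subst h; exact ⟨n, fun i hi => (hn i hi).trans (hk i hi), hn'.trans hk'⟩
  · exact ⟨k, fun i hi => (hn i (hi.trans h)).trans (hk i hi), by rw [hn k h]; exact hk'⟩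

/-- If every tail of `b` is lexicographically smaller than an expansion `e` of `1` with infinitely
many nonzero digits, then `b` has value less than `1`. -/
lemma parry {Q : ℝ} (hQ : 1 < Q) {m : ℕ} {b e : ℕ → ℕ} (hb : ∀ i, b i ≤ m) (he : ∀ i, e i ≤ m)
    (he1 : val Q e = 1) (hinf : ∀ k, ∃ i, 0 < e (k + i)) (hlt : ∀ k, lexLt (sh k b) e) :
    val Q b < 1 := by
  have h0 : (0 : ℝ) < Q := by linarith
  have hB : (0 : ℝ) ≤ m / (Q - 1) := div_nonneg (by positivity) (by linarith)
  -- Comparing with `e` up to the first difference contracts the excess of a tail value over `1`.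
  have key : ∀ N k, val Q (sh k b) ≤ 1 + m / (Q - 1) / Q ^ N := by
    intro N
    induction N with
    | zero => intro k; have := val_le hQ (sh_le hb k); simp; linarith
    | succ N ih =>
      intro k
      obtain ⟨n, h1, h2⟩ := hlt k
      have h3 := val_diff hQ (sh_le hb k) he n h1
      rw [he1, sh_sh] at h3
      have h4 := ih (k + (n + 1))
      have h5 := val_nonneg hQ (sh (n + 1) e)
      have h6 : (sh k b n : ℝ) + 1 ≤ e n := by exact_mod_cast h2
      have h7 : (val Q (sh k b) - 1) * Q ^ (n + 1) ≤ m / (Q - 1) / Q ^ N := by linarith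
      by_contra hcon
      push Not at hcon
      have h8 : Q ≤ Q ^ (n + 1) := by
        simpa using pow_le_pow_right₀ hQ.le (show 1 ≤ n + 1 by omega)
      have h9 : m / (Q - 1) / Q ^ N < (val Q (sh k b) - 1) * Q := by
        have : m / (Q - 1) / Q ^ N = m / (Q - 1) / Q ^ (N + 1) * Q := by
          rw [pow_succ]; field_simp
        rw [this]
        exact mul_lt_mul_of_pos_right (by linarith) h0
      have h10 : 0 ≤ val Q (sh k b) - 1 := by
        have : 0 ≤ m / (Q - 1) / Q ^ (N + 1) := by positivity
        linarith
      have := mul_le_mul_of_nonneg_left h8 h10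
      linarith
  have key2 : ∀ k, val Q (sh k b) ≤ 1 := by
    intro k
    have ht : Filter.Tendsto (fun N : ℕ => 1 + m / (Q - 1) / Q ^ N) Filter.atTop
        (nhds (1 + 0)) :=
      ((tendsto_const_nhds).div_atTop (tendsto_pow_atTop_atTop_of_one_lt hQ)).const_add 1
    rw [add_zero] at ht
    exact ge_of_tendsto' ht (fun N => key N k)
  obtain ⟨n, h1, h2⟩ := hlt 0
  have hs : sh 0 b = b := by funext i; simp [sh]
  rw [hs] at h1 h2
  have h3 := val_diff hQ hb he n h1
  rw [he1] at h3
  obtain ⟨i, hi⟩ := hinf (n + 1)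
  have h5 : 0 < val Q (sh (n + 1) e) := val_pos hQ (sh_le he _) (i := i) hi
  have h4 := key2 (n + 1)
  have h6 : (b n : ℝ) + 1 ≤ e n := by exact_mod_cast h2
  by_contra hcon
  push Not at hcon
  have : 0 ≤ (val Q b - 1) * Q ^ (n + 1) := mul_nonneg (by linarith) (by positivity)
  linarith

/-! ### Univoque sequences -/

/-- Characterization of univoque sequences with digits in `{0, …, m}` through the values of their
tails and of the reflections of their tails. -/
def Good (m : ℕ) (Q : ℝ) (c : ℕ → ℕ) : Prop :=
  (∀ i, c i ≤ m) ∧ (∀ n, c n < m → val Q (sh (n + 1) c) < 1) ∧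
    ∀ n, 0 < c n → val Q (cj m (sh (n + 1) c)) < 1

lemma Good.conj {m : ℕ} {Q : ℝ} {c : ℕ → ℕ} (h : Good m Q c) : Good m Q (cj m c) := by
  obtain ⟨h1, h2, h3⟩ := h
  refine ⟨cj_le m c, fun n hn => ?_, fun n hn => ?_⟩
  · exact h3 n (by simp only [cj] at hn; omega)
  · have := h2 n (by simp only [cj] at hn; omega)
    rwa [← cj_cj (sh_le h1 (n + 1))] at this

lemma Good.unique {m : ℕ} {Q : ℝ} (hQ : 1 < Q) {c c' : ℕ → ℕ} (h : Good m Q c)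
    (hc' : ∀ i, c' i ≤ m) (hv : val Q c' = val Q c) : c' = c := by
  obtain ⟨h1, h2, h3⟩ := h
  by_contra hne
  rcases lexLt_or hne with ⟨n, ha, hb⟩ | ⟨n, ha, hb⟩
  · have h4 := val_diff hQ hc' h1 n ha
    have h5 := h3 n (by omega)
    rw [val_cj hQ (sh_le h1 _)] at h5
    have h6 := val_le hQ (sh_le hc' (n + 1))
    have h7 : (c' n : ℝ) + 1 ≤ c n := by exact_mod_cast hb
    rw [hv, sub_self, zero_mul] at h4
    linarith
  · have h4 := val_diff hQ h1 hc' n ha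
    have h5 := h2 n (lt_of_lt_of_le hb (hc' n))
    have h6 := val_nonneg hQ (sh (n + 1) c')
    have h7 : (c n : ℝ) + 1 ≤ c' n := by exact_mod_cast hb
    rw [hv, sub_self, zero_mul] at h4
    linarith

/-- Every point of `[0, m / (Q - 1)]` has an expansion in base `Q` with digits in `{0, …, m}`. -/
lemma exists_val {m : ℕ} {Q : ℝ} (hQ : 1 < Q) (hm : Q ≤ m + 1) {y : ℝ} (hy0 : 0 ≤ y)
    (hy : y ≤ m / (Q - 1)) : ∃ c : ℕ → ℕ, (∀ i, c i ≤ m) ∧ val Q c = y := by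
  have h0 : (0 : ℝ) < Q := by linarith
  have hB1 : 1 ≤ m / (Q - 1) := by rw [le_div_iff₀ (by linarith)]; linarith
  set B : ℝ := m / (Q - 1) with hB
  have hQB : Q * B = m + B := by
    rw [hB]; have : Q - 1 ≠ 0 := by linarith
    field_simp; ring
  have step : ∀ z : Set.Icc (0 : ℝ) B, ∃ d : ℕ, d ≤ m ∧ Q * z.1 - d ∈ Set.Icc (0 : ℝ) B := by
    rintro ⟨z, hz0, hz1⟩
    have hz : 0 ≤ Q * z := by positivity
    have hz' : Q * z ≤ m + B := by rw [← hQB]; gcongr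
    by_cases hf : ⌊Q * z⌋₊ ≤ m
    · refine ⟨⌊Q * z⌋₊, hf, ?_, ?_⟩
      · have := Nat.floor_le hz; simp only; linarith
      · have := Nat.lt_floor_add_one (Q * z); simp only; linarith
    · refine ⟨m, le_rfl, ?_, ?_⟩
      · have h1 : (m : ℝ) ≤ ⌊Q * z⌋₊ := by exact_mod_cast (not_le.1 hf).le
        have := Nat.floor_le hz; simp only; linarith
      · simp only; linarith
  choose D hD1 hD2 using step
  let R : ℕ → Set.Icc (0 : ℝ) B := fun n => Nat.rec ⟨y, hy0, hy⟩ (fun _ z => ⟨_, hD2 z⟩) n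
  have hR : ∀ n, (R (n + 1)).1 = Q * (R n).1 - D (R n) := fun n => rfl
  refine ⟨fun n => D (R n), fun i => hD1 _, ?_⟩
  have hsum : ∀ n, ∑ i ∈ Finset.range n, (D (R i) : ℝ) / Q ^ (i + 1) = y - (R n).1 / Q ^ n := by
    intro n
    induction n with
    | zero => simp [R]
    | succ n ih =>
      rw [Finset.sum_range_succ, ih, hR]
      field_simp
      ring
  have hs := (val_summable hQ (c := fun n => D (R n)) (fun i => hD1 _)).hasSum.tendsto_sum_nat
  refine tendsto_nhds_unique hs ?_
  simp only [hsum]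
  have : Filter.Tendsto (fun n : ℕ => (R n).1 / Q ^ n) Filter.atTop (nhds 0) := by
    refine squeeze_zero (g := fun n : ℕ => B / Q ^ n) (fun n => ?_) (fun n => ?_)
      ((tendsto_const_nhds).div_atTop (tendsto_pow_atTop_atTop_of_one_lt hQ))
    · exact div_nonneg (R n).2.1 (by positivity)
    · have := (R n).2.2
      gcongr
  simpa using this.const_sub y

lemma tail_lt_of_unique {m : ℕ} {Q : ℝ} (hQ : 1 < Q) (hm : Q ≤ m + 1) {c : ℕ → ℕ}
    (hc : ∀ i, c i ≤ m) (hu : ∀ c' : ℕ → ℕ, (∀ i, c' i ≤ m) → val Q c' = val Q c → c' = c)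
    (n : ℕ) (hn : c n < m) : val Q (sh (n + 1) c) < 1 := by
  by_contra hcon
  push Not at hcon
  have h0 : (0 : ℝ) < Q := by linarith
  -- One unit can be carried from the tail to the digit at position `n`.
  obtain ⟨f, hf, hf'⟩ := exists_val hQ hm (y := val Q (sh (n + 1) c) - 1) (by linarith)
    (by have := val_le hQ (sh_le hc (n + 1)); linarith)
  let c' : ℕ → ℕ := fun i => if i < n then c i else if i = n then c n + 1 else f (i - (n + 1))
  have hc' : ∀ i, c' i ≤ m := by
    intro i
    simp only [c']
    split_ifs
    · exact hc i
    · omega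
    · exact hf _
  have hcn : c' n = c n + 1 := by simp [c']
  have hsh : sh (n + 1) c' = f := by
    funext i
    have h1 : ¬ (n + 1 + i < n) := by omega
    have h2 : ¬ (n + 1 + i = n) := by omega
    simp only [sh, c', h1, h2, if_false]
    congr 1; omega
  have hd := val_diff hQ hc' hc n (fun i hi => by simp [c', hi])
  rw [hsh, hf', hcn] at hd
  push_cast at hd
  have hd' : (val Q c' - val Q c) * Q ^ (n + 1) = 0 := by rw [hd]; ring
  have hp : Q ^ (n + 1) ≠ 0 := by positivity
  have := hu c' hc' (by have := (mul_eq_zero.1 hd').resolve_right hp; linarith)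
  rw [this] at hcn
  omega

lemma good_of_unique {m : ℕ} {Q : ℝ} (hQ : 1 < Q) (hm : Q ≤ m + 1) {c : ℕ → ℕ}
    (hc : ∀ i, c i ≤ m) (hu : ∀ c' : ℕ → ℕ, (∀ i, c' i ≤ m) → val Q c' = val Q c → c' = c) :
    Good m Q c := by
  refine ⟨hc, tail_lt_of_unique hQ hm hc hu, fun n hn => ?_⟩
  refine tail_lt_of_unique hQ hm (cj_le m c) (fun c' hc' hv => ?_) n
    (by have := hc n; simp only [cj]; omega)
  have := hu (cj m c') (cj_le m c') (by rw [val_cj hQ hc', hv, val_cj hQ hc]; ring)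
  rw [← this, cj_cj hc']

lemma isExpansion_iff {m : ℕ} {Q : ℝ} (hm : (m : ℝ) < Q) (hm' : Q ≤ m + 1) (c : ℕ → ℕ) (x : ℝ) :
    IsExpansion Q c x ↔ (∀ i, c i ≤ m) ∧ val Q c = x := by
  have : ∀ i, (c i : ℝ) < Q ↔ c i ≤ m := by
    intro i
    constructor
    · intro h
      have : (c i : ℝ) < ((m + 1 : ℕ) : ℝ) := by push_cast; linarith
      have := Nat.cast_lt.1 this
      omega
    · intro h
      have : (c i : ℝ) ≤ m := by exact_mod_cast h
      linarith
  simp only [IsExpansion, this, val]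
  exact and_congr_right fun _ => eq_comm

lemma mem_USeq_iff {m : ℕ} {Q : ℝ} (hQ : 1 < Q) (hm : (m : ℝ) < Q) (hm' : Q ≤ m + 1)
    (c : ℕ → ℕ) : c ∈ USeq Q ↔ Good m Q c := by
  simp only [USeq, Set.mem_ofPred_eq, isExpansion_iff hm hm']
  constructor
  · rintro ⟨x, ⟨h1, rfl⟩, h3⟩
    exact good_of_unique hQ hm' h1 fun c' h h' => h3 c' ⟨h, h'⟩
  · intro h
    exact ⟨_, ⟨h.1, rfl⟩, fun c' h' => h.unique hQ h'.1 h'.2⟩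

lemma mem_UnivBases {m : ℕ} {Q : ℝ} (hQ : 1 < Q) (hm : (m : ℝ) < Q) (hm' : Q ≤ m + 1)
    {c : ℕ → ℕ} (hc : Good m Q c) (h1 : val Q c = 1) : Q ∈ UnivBases :=
  ⟨hQ, c, (isExpansion_iff hm hm' c 1).2 ⟨hc.1, h1⟩, fun c' h' => by
    have := (isExpansion_iff hm hm' c' 1).1 h'
    exact hc.unique hQ this.1 (this.2.trans h1.symm)⟩

/-! ### Lexicographic properties of the limiting expansion of `1` -/

/-- An expansion `d` of `1` in base `Q` whose tails have value at most `1` after a digit below `m`,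
and whose reflected tails have value less than `1` after a nonzero digit. -/
structure Quasi (m : ℕ) (Q : ℝ) (d : ℕ → ℕ) : Prop where
  le : ∀ i, d i ≤ m
  one : val Q d = 1
  tail : ∀ k, d k < m → val Q (sh (k + 1) d) ≤ 1
  refl : ∀ k, 0 < d k → val Q (cj m (sh (k + 1) d)) < 1

section Lex

variable {m : ℕ} {Q : ℝ} {d : ℕ → ℕ}

lemma Quasi.infinite (hQ : 1 < Q) (hm : Q ≤ m + 1) (h : Quasi m Q d) (k : ℕ) :
    ∃ i, 0 < d (k + i) := by
  classical
  by_contra hcon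
  have hex : ∃ k, ∀ i, d (k + i) = 0 := ⟨k, fun i => by by_contra h'; exact hcon ⟨i, by omega⟩⟩
  have hs := Nat.find_spec hex
  have hmin := fun j hj => Nat.find_min hex (m := j) hj
  have hz : val Q (sh (Nat.find hex) d) = 0 := by simp [val, sh, hs]
  rcases hk : Nat.find hex with _ | k'
  · rw [hk] at hz
    have : sh 0 d = d := by funext i; simp [sh]
    rw [this, h.one] at hz
    norm_num at hz
  · rw [hk] at hs hz
    have hpos : 0 < d k' := by
      by_contra h0
      refine hmin k' (by omega) fun i => ?_
      rcases i with _ | i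
      · simpa using h0
      · have := hs i; rwa [show k' + (i + 1) = k' + 1 + i by omega]
    have h1 := h.refl k' hpos
    rw [val_cj hQ (sh_le h.le _), hz, sub_zero, div_lt_one (by linarith)] at h1
    linarith

lemma Quasi.zero_pos (hQ : 1 < Q) (hm : Q ≤ m + 1) (h : Quasi m Q d)
    (hle : ∀ k, ¬ lexLt d (sh k d)) : 0 < d 0 := by
  obtain ⟨i, hi⟩ := h.infinite hQ hm 0
  by_contra h0
  exact hle (0 + i) ⟨0, fun i hi => by omega, by simp only [sh, add_zero]; omega⟩

lemma Quasi.tails_le (hQ : 1 < Q) (hm : Q ≤ m + 1) (h : Quasi m Q d) (k : ℕ) :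
    ¬ lexLt d (sh k d) := by
  induction k with
  | zero => have : sh 0 d = d := by funext i; simp [sh]
            rw [this]; exact not_lexLt_self d
  | succ k ih =>
    rintro ⟨n, h1, h2⟩
    rcases lt_or_eq_of_le (h.le k) with hk | hk
    · have h3 := val_diff hQ h.le (sh_le h.le (k + 1)) n h1
      have h4 := h.tail n (lt_of_lt_of_le h2 (h.le _))
      have h5 := h.tail k hk
      rw [h.one, sh_sh] at h3
      obtain ⟨i, hi⟩ := h.infinite hQ hm (k + 1 + (n + 1))
      have h6 : 0 < val Q (sh (k + 1 + (n + 1)) d) := val_pos hQ (sh_le h.le _) (i := i) hi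
      have h7 : (d n : ℝ) + 1 ≤ sh (k + 1) d n := by exact_mod_cast h2
      have h8 : 0 ≤ (1 - val Q (sh (k + 1) d)) * Q ^ (n + 1) :=
        mul_nonneg (by linarith) (by have : 0 < Q := by linarith
                                     positivity)
      linarith
    · -- Prepending the maximal digit `d k = m` to the tail shows that `d` starts with `m^(n+1)`.
      have hall : ∀ j, j ≤ n → d j = m := by
        intro j
        induction j using Nat.strong_induction_on with
        | _ j ihj =>
          intro hj
          by_contra h0
          have h5 := h.le j
          have hrun : ∀ i, i ≤ j → sh k d i = m := by
            intro i hi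
            rcases i with _ | i
            · simpa [sh] using hk
            · have e1 := h1 i (by omega)
              have e2 := ihj i (by omega) (by omega)
              simp only [sh] at e1 ⊢
              rw [show k + (i + 1) = k + 1 + i by omega, ← e1, e2]
          exact ih ⟨j, fun i hi => by rw [hrun i hi.le, ihj i hi (by omega)],
            by rw [hrun j le_rfl]; omega⟩
      have := hall n le_rfl
      have := sh_le h.le (k + 1) n
      omega

lemma Quasi.one_le_of_lt (hQ : 1 < Q) (h : Quasi m Q d) {b : ℕ → ℕ} (hb : ∀ i, b i ≤ m) (n : ℕ)
    (h1 : ∀ i, i < n → d i = b i) (h2 : d n < b n) : 1 ≤ val Q b := by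
  have h0 : 0 < Q := by linarith
  have h3 := val_diff hQ h.le hb n h1
  have h4 := h.tail n (lt_of_lt_of_le h2 (hb _))
  have h5 := val_nonneg hQ (sh (n + 1) b)
  have h7 : (d n : ℝ) + 1 ≤ b n := by exact_mod_cast h2
  rw [h.one] at h3
  by_contra hcon
  push Not at hcon
  have h8 : 0 < (1 - val Q b) * Q ^ (n + 1) := mul_pos (by linarith) (by positivity)
  linarith

lemma Quasi.refl_lt (hQ : 1 < Q) (hm : Q ≤ m + 1) (h : Quasi m Q d) (k : ℕ) :
    lexLt (cj m (sh (k + 1) d)) d := by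
  have hpos := h.zero_pos hQ hm (h.tails_le hQ hm)
  have h0 : 0 < Q := by linarith
  induction k with
  | zero =>
    have h1 := h.refl 0 hpos
    rcases lexLt_or (a := cj m (sh (0 + 1) d)) (b := d)
      (fun he => by rw [he, h.one] at h1; exact lt_irrefl _ h1) with h2 | ⟨n, h2, h3⟩
    · exact h2
    · exact absurd h1 (not_lt.2 (h.one_le_of_lt hQ (cj_le m _) n h2 h3))
  | succ k ih =>
    rcases Nat.eq_zero_or_pos (d (k + 1)) with hz | hp
    · -- After a zero digit the reflected tail at `k + 1` is `m` followed by the one at `k + 2`.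
      obtain ⟨n, h2, h3⟩ := ih
      have hd0 : d 0 = m := by
        have h5 := h.le 0
        rcases n with _ | n
        · simp only [cj, sh, add_zero, hz] at h3; omega
        · have := h2 0 (by omega)
          simp only [cj, sh, add_zero, hz] at this; omega
      have hn : n ≠ 0 := by
        rintro rfl
        simp only [cj, sh, add_zero, hz] at h3
        omega
      obtain ⟨n, rfl⟩ := Nat.exists_eq_succ_of_ne_zero hn
      have hlt : lexLt (cj m (sh (k + 1 + 1) d)) (sh 1 d) := by
        refine ⟨n, fun i hi => ?_, ?_⟩
        · have := h2 (i + 1) (by omega)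
          simp only [cj, sh] at this ⊢
          rwa [show k + 1 + 1 + i = k + 1 + (i + 1) by omega, show 1 + i = i + 1 by omega]
        · simp only [cj, sh, Nat.succ_eq_add_one] at h3 ⊢
          rwa [show k + 1 + 1 + n = k + 1 + (n + 1) by omega, show 1 + n = n + 1 by omega]
      by_cases he : sh 1 d = d
      · rwa [he] at hlt
      · exact lexLt_trans hlt ((lexLt_or he).resolve_right (h.tails_le hQ hm 1))
    · have h1 := h.refl (k + 1) hp
      rcases lexLt_or (a := cj m (sh (k + 1 + 1) d)) (b := d)
        (fun he => by rw [he, h.one] at h1; exact lt_irrefl _ h1) with h2 | ⟨n, h2, h3⟩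
      · exact h2
      · exact absurd h1 (not_lt.2 (h.one_le_of_lt hQ (cj_le m _) n h2 h3))

lemma Quasi.eq_sh (hQ : 1 < Q) (hm : Q ≤ m + 1) (h : Quasi m Q d) (p : ℕ)
    (hp : val Q (sh p d) = 1) : sh p d = d := by
  by_contra hne
  obtain ⟨n, h2, h3⟩ := (lexLt_or hne).resolve_right (h.tails_le hQ hm p)
  have h4 := val_diff hQ (sh_le h.le p) h.le n h2
  have h5 : val Q (sh (n + 1) (sh p d)) ≤ 1 := by
    rw [sh_sh]
    exact h.tail (p + n) (lt_of_lt_of_le h3 (h.le n))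
  obtain ⟨i, hi⟩ := h.infinite hQ hm (n + 1)
  have h6 : 0 < val Q (sh (n + 1) d) := val_pos hQ (sh_le h.le _) (i := i) hi
  have h7 : (sh p d n : ℝ) + 1 ≤ d n := by exact_mod_cast h3
  rw [hp, h.one, sub_self, zero_mul] at h4
  linarith

/-- For periodic `d`, the first difference between `d` and a reflected tail of `d` occurs at a
uniformly bounded position. -/
lemma Quasi.uniform (hQ : 1 < Q) (hm : Q ≤ m + 1) (h : Quasi m Q d) {p : ℕ} (hp : 0 < p)
    (hper : sh p d = d) :
    ∃ (L : ℕ) (j : ℕ → ℕ), ∀ k, j k < L ∧ (∀ t, t < j k → m - d (k + t) = d t) ∧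
      m - d (k + j k) < d (j k) := by
  have hlt : ∀ k, lexLt (cj m (sh k d)) d := by
    intro k
    rcases k with _ | k
    · have := h.refl_lt hQ hm (p - 1)
      rw [Nat.sub_add_cancel hp, hper] at this
      have e : sh 0 d = d := by funext i; simp [sh]
      rwa [e]
    · exact h.refl_lt hQ hm k
  choose J hJ1 hJ2 using hlt
  have hmod : ∀ k i, d (k % p + i) = d (k + i) := by
    have hstep : ∀ i, d (p + i) = d i := fun i => congrFun hper i
    have hmul : ∀ a i, d (p * a + i) = d i := by
      intro a
      induction a with
      | zero => simp
      | succ a ih => intro i; rw [show p * (a + 1) + i = p + (p * a + i) by ring, hstep, ih]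
    intro k i
    have := hmul (k / p) (k % p + i)
    rw [← this, ← add_assoc, Nat.div_add_mod]
  refine ⟨(Finset.range p).sup J + 1, fun k => J (k % p), fun k => ⟨?_, fun t ht => ?_, ?_⟩⟩
  · exact Nat.lt_succ_of_le (Finset.le_sup (Finset.mem_range.2 (Nat.mod_lt k hp)))
  · have := hJ1 (k % p) t ht
    simpa only [cj, sh, hmod] using this
  · have := hJ2 (k % p)
    simpa only [cj, sh, hmod] using this

end Lex

/-! ### Cutting and regluing the limiting expansion -/

section Glue

variable {m L : ℕ} {d j : ℕ → ℕ}

/-- There are arbitrarily long prefixes `d_0 … d_{M-1}` that split `d` well: for each position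
`i < M` the reflected tail at `i` drops below `d` before position `M`. -/
lemma exists_cut (hle : ∀ k, ¬ lexLt d (sh k d))
    (hj : ∀ k, j k < L ∧ (∀ t, t < j k → m - d (k + t) = d t) ∧ m - d (k + j k) < d (j k))
    (M0 : ℕ) : ∃ M, M0 ≤ M ∧ ∀ i, i < M → i + j i < M := by
  classical
  by_cases hgood : ∀ i, i < M0 + L → i + j i < M0 + L
  · exact ⟨M0 + L, by omega, hgood⟩
  push Not at hgood
  -- The first bad position for the cut at `M0 + L` is itself a good place to cut.
  have hs := Nat.find_spec hgood
  have hmin := fun a ha => Nat.find_min hgood (m := a) ha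
  set i := Nat.find hgood
  have hji := (hj i).1
  refine ⟨i, by omega, fun a ha => ?_⟩
  by_contra hbad
  push Not at hbad
  have h1 : a + j a < M0 + L := by
    by_contra h
    exact hmin a ha ⟨by omega, by omega⟩
  refine hle (i - a) ⟨j a - (i - a), fun t ht => ?_, ?_⟩
  · have e1 := (hj a).2.1 (i - a + t) (by omega)
    have e2 := (hj i).2.1 t (by omega)
    rw [show a + (i - a + t) = i + t by omega] at e1
    simp only [sh]
    omega
  · have e1 := (hj a).2.2
    have e2 := (hj i).2.1 (j a - (i - a)) (by omega)
    rw [show a + j a = i + (j a - (i - a)) by omega, e2] at e1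
    simp only [sh]
    rwa [show i - a + (j a - (i - a)) = j a by omega]

/-- The sequence `A (C̄ C)^∞`, where `A` and `C` are the prefixes of `d` of lengths `M` and `N`. -/
def glue (m : ℕ) (d : ℕ → ℕ) (N M : ℕ) : ℕ → ℕ := fun i =>
  if i < M then d i
  else if (i - M) / N % 2 = 0 then m - d ((i - M) % N) else d ((i - M) % N)

/-- A sequence starting with a reflected suffix of a well-cut prefix of `d` is smaller than any
sequence `g` sharing a long enough prefix with `d`. -/
lemma refl_suffix_lt (hj : ∀ k, j k < L ∧ (∀ t, t < j k → m - d (k + t) = d t) ∧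
      m - d (k + j k) < d (j k)) {g f : ℕ → ℕ} {M N u : ℕ} (hg : ∀ i, i < M → g i = d i)
    (hN : ∀ i, i < N → i + j i < N) (hNM : N ≤ M) (hu : u < N)
    (hf : ∀ t, u + t < N → f t = m - d (u + t)) : lexLt f g := by
  have h1 := hN u hu
  refine ⟨j u, fun t ht => ?_, ?_⟩
  · rw [hf t (by omega), hg t (by omega), (hj u).2.1 t ht]
  · rw [hf _ (by omega), hg _ (by omega)]
    exact (hj u).2.2

/-- A sequence starting with a suffix `d_u … d_{N-1}` of a prefix of `d`, followed by the beginning of the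
reflection of `d`, is smaller than any sequence `g` sharing a long enough prefix with `d`. -/
lemma suffix_lt (hd : ∀ i, d i ≤ m) (hle : ∀ k, ¬ lexLt d (sh k d))
    (hj : ∀ k, j k < L ∧ (∀ t, t < j k → m - d (k + t) = d t) ∧
      m - d (k + j k) < d (j k)) {g f : ℕ → ℕ} {M N u : ℕ} (hg : ∀ i, i < M → g i = d i)
    (hu : u ≤ N) (hM : N - u + j (N - u) < M)
    (hf : ∀ t, u + t < N → f t = d (u + t)) (hf' : ∀ t, t < L → f (N - u + t) = m - d t) :
    lexLt f g := by
  classical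
  by_cases hagree : ∀ t, u + t < N → d (u + t) = d t
  · have hjj := hj (N - u)
    refine ⟨N - u + j (N - u), fun t ht => ?_, ?_⟩
    · rw [hg t (by omega)]
      by_cases ht' : u + t < N
      · rw [hf t ht', hagree t ht']
      · have e := hjj.2.1 (t - (N - u)) (by omega)
        have e' := hf' (t - (N - u)) (by omega)
        rw [show N - u + (t - (N - u)) = t by omega] at e e'
        have := hd t
        omega
    · rw [hg _ hM, hf' _ hjj.1]
      have := hjj.2.2
      have := hd (j (N - u))
      omega
  · push Not at hagree
    have hs := Nat.find_spec hagree
    have hmin := fun a ha => Nat.find_min hagree (m := a) ha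
    set t := Nat.find hagree
    have heq : ∀ i, i < t → d (u + i) = d i := by
      intro i hi
      by_contra hne
      exact hmin i hi ⟨by omega, hne⟩
    refine ⟨t, fun i hi => ?_, ?_⟩
    · rw [hf i (by omega), hg i (by omega), heq i hi]
    · rw [hf t hs.1, hg t (by omega)]
      by_contra hcon
      have := hs.2
      exact hle u ⟨t, fun i hi => (heq i hi).symm, by simp only [sh]; omega⟩

lemma glue_le (hd : ∀ i, d i ≤ m) (N M : ℕ) : ∀ i, glue m d N M i ≤ m := by
  intro i
  simp only [glue]
  split_ifs
  · exact hd _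
  · exact Nat.sub_le _ _
  · exact hd _

lemma glue_block {N M : ℕ} (b s : ℕ) (hs : s < N) :
    glue m d N M (M + (N * b + s)) = if b % 2 = 0 then m - d s else d s := by
  have h1 : (N * b + s) / N = b := by
    rw [Nat.mul_add_div (by omega), Nat.div_eq_of_lt hs, add_zero]
  have h2 : (N * b + s) % N = s := by rw [Nat.mul_add_mod, Nat.mod_eq_of_lt hs]
  have h3 : ¬ (M + (N * b + s) < M) := by omega
  simp only [glue, h3, if_false, Nat.add_sub_cancel_left, h1, h2]

/-- All proper tails of `glue m d N M`, and all reflected tails, are smaller than the sequence. -/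
lemma glue_lt (hd : ∀ i, d i ≤ m) (hle : ∀ k, ¬ lexLt d (sh k d))
    (hj : ∀ k, j k < L ∧ (∀ t, t < j k → m - d (k + t) = d t) ∧ m - d (k + j k) < d (j k))
    {N M : ℕ} (hN0 : 0 < N) (hLN : L ≤ N) (hNM : N + L ≤ M) (hN : ∀ i, i < N → i + j i < N)
    (hM : ∀ i, i < M → i + j i < M) (k : ℕ) :
    (0 < k → lexLt (sh k (glue m d N M)) (glue m d N M)) ∧
      lexLt (cj m (sh k (glue m d N M))) (glue m d N M) := by
  have hg : ∀ i, i < M → glue m d N M i = d i := fun i hi => by simp [glue, hi]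
  rcases lt_or_ge k M with hk | hk
  · refine ⟨fun hk0 => ?_, ?_⟩
    · refine suffix_lt hd hle hj hg hk.le (hM _ (by omega)) (fun t ht => hg _ ht) fun t ht => ?_
      have := glue_block (m := m) (d := d) (M := M) 0 t (show t < N by omega)
      simp only [sh]
      rw [show k + (M - k + t) = M + (N * 0 + t) by omega, this]
      simp
    · refine refl_suffix_lt hj hg hM le_rfl hk fun t ht => ?_
      simp only [cj, sh]
      rw [hg _ ht]
  · obtain ⟨b, u, hu, hkb⟩ : ∃ b u, u < N ∧ k = M + (N * b + u) :=
      ⟨(k - M) / N, (k - M) % N, Nat.mod_lt _ hN0, by rw [Nat.div_add_mod]; omega⟩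
    have hin : ∀ t, u + t < N → sh k (glue m d N M) t =
        if b % 2 = 0 then m - d (u + t) else d (u + t) := by
      intro t ht
      simp only [sh]
      rw [hkb, ← glue_block (M := M) b (u + t) ht]
      congr 1; omega
    have hnext : ∀ t, t < N → sh k (glue m d N M) (N - u + t) =
        if (b + 1) % 2 = 0 then m - d t else d t := by
      intro t ht
      simp only [sh]
      rw [hkb, ← glue_block (M := M) (b + 1) t ht, Nat.mul_succ]
      congr 1; omega
    have hMu : N - u + j (N - u) < M := by
      have := (hj (N - u)).1
      omega
    rcases Nat.mod_two_eq_zero_or_one b with hb | hb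
    · have hb' : ¬ ((b + 1) % 2 = 0) := by omega
      simp only [hb, hb', if_true, if_false] at hin hnext
      refine ⟨fun _ => refl_suffix_lt hj hg hN (by omega) hu hin,
        suffix_lt hd hle hj hg hu.le hMu (fun t ht => ?_) fun t ht => ?_⟩
      · have := hd (u + t)
        simp only [cj]; rw [hin t ht]; omega
      · simp only [cj]; rw [hnext t (by omega)]
    · have hb' : (b + 1) % 2 = 0 := by omega
      have hb1 : ¬ (b % 2 = 0) := by omega
      simp only [hb1, hb', if_true, if_false] at hin hnext
      refine ⟨fun _ => suffix_lt hd hle hj hg hu.le hMu hin fun t ht => hnext t (by omega),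
        refl_suffix_lt hj hg hN (by omega) hu fun t ht => ?_⟩
      simp only [cj]; rw [hin t ht]

end Glue

/-! ### Approximation by univoque bases -/

lemma val_lt_of_base_lt {Q' Q : ℝ} (hQ' : 1 < Q') (hQ : Q' < Q) {m : ℕ} {c : ℕ → ℕ}
    (hc : ∀ i, c i ≤ m) {i : ℕ} (hi : 0 < c i) : val Q c < val Q' c := by
  have h0 : (0 : ℝ) < Q' := by linarith
  refine Summable.tsum_lt_tsum (i := i) (fun k => ?_) ?_ (val_summable (hQ'.trans hQ) hc)
    (val_summable hQ' hc)
  · gcongr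
  · have : (0 : ℝ) < c i := by exact_mod_cast hi
    gcongr

lemma val_le_of_base_le {Q' Q : ℝ} (hQ' : 1 < Q') (hQ : Q' ≤ Q) {m : ℕ} {c : ℕ → ℕ}
    (hc : ∀ i, c i ≤ m) : val Q c ≤ val Q' c := by
  have h0 : (0 : ℝ) < Q' := by linarith
  refine Summable.tsum_le_tsum (fun k => ?_) (val_summable (hQ'.trans_le hQ) hc)
    (val_summable hQ' hc)
  gcongr

/-- If `d` is not already the unique expansion of `1` in base `q`, it is periodic, and the sequences
`glue m d N M`, with `N` fixed and `M` a large cut, are unique expansions of `1` in bases tending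
to `q` from below. -/
lemma Quasi.mem_closure {m : ℕ} {q : ℝ} {d : ℕ → ℕ} (hq : 1 < q) (hm : (m : ℝ) < q)
    (hm' : q ≤ m + 1) (h : Quasi m q d) : q ∈ closure UnivBases := by
  by_cases hall : ∀ k, d k < m → val q (sh (k + 1) d) < 1
  · exact subset_closure (mem_UnivBases hq hm hm' ⟨h.le, hall, h.refl⟩ h.one)
  push Not at hall
  obtain ⟨k, hk, hk1⟩ := hall
  have hper := h.eq_sh hq hm' (k + 1) (le_antisymm (h.tail k hk) hk1)
  obtain ⟨L, j, hj⟩ := h.uniform hq hm' (Nat.succ_pos k) hper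
  have hle := h.tails_le hq hm'
  obtain ⟨N, hLN, hN⟩ := exists_cut hle hj (L + 1)
  rw [Metric.mem_closure_iff]
  intro ε hε
  obtain ⟨q', hq'1, hq'2⟩ := exists_between (show max (max 1 (m : ℝ)) (q - ε) < q from
    max_lt (max_lt hq hm) (by linarith))
  have hq1 : 1 < q' := ((le_max_left _ _).trans (le_max_left _ _)).trans_lt hq'1
  have hqm : (m : ℝ) < q' := ((le_max_right _ _).trans (le_max_left _ _)).trans_lt hq'1
  have hqe : q - ε < q' := (le_max_right _ _).trans_lt hq'1
  have h0 : 0 < q' := by linarith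
  have hd1 : 1 < val q' d := by
    obtain ⟨i, hi⟩ := h.infinite hq hm' 0
    rw [← h.one]
    exact val_lt_of_base_lt hq1 hq'2 h.le hi
  obtain ⟨M1, hM1⟩ := Filter.eventually_atTop.1
    ((val_summable hq1 h.le).hasSum.tendsto_sum_nat.eventually (lt_mem_nhds hd1))
  obtain ⟨M, hMM, hM⟩ := exists_cut hle hj (max M1 (N + L))
  have hM2 : M1 ≤ M := (le_max_left _ _).trans hMM
  have hM3 : N + L ≤ M := (le_max_right _ _).trans hMM
  have hlt := glue_lt h.le hle hj (by omega) (by omega) hM3 hN hM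
  have hgl := glue_le h.le N M
  have hg : ∀ i, i < M → glue m d N M i = d i := fun i hi => by simp [glue, hi]
  have hgd : lexLt (glue m d N M) d := by
    refine suffix_lt h.le hle hj (g := d) (M := M + L + 1) (N := M) (u := 0) (fun i _ => rfl)
      (by omega) ?_ (fun t ht => ?_) fun t ht => ?_
    · have := (hj (M - 0)).1
      omega
    · rw [zero_add] at ht ⊢; exact hg t ht
    · have := glue_block (m := m) (d := d) (M := M) 0 t (show t < N by omega)
      rw [show M - 0 + t = M + (N * 0 + t) by omega, this]
      simp
  set g := glue m d N M with hgdef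
  have hs0 : sh 0 g = g := by funext i; simp [sh]
  have hgq : val q g < 1 := by
    refine parry hq hgl h.le h.one (h.infinite hq hm') fun k => ?_
    rcases Nat.eq_zero_or_pos k with rfl | hk
    · rwa [hs0]
    · exact lexLt_trans ((hlt k).1 hk) hgd
  have hgq' : 1 < val q' g := by
    refine (hM1 M hM2).trans_le ?_
    rw [val_split hq1 hgl M, Finset.sum_congr rfl
      (fun i hi => by rw [← hg i (Finset.mem_range.1 hi)])]
    have := val_nonneg hq1 (sh M g)
    have : 0 ≤ val q' (sh M g) / q' ^ M := by positivity
    linarith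
  have hcont : ContinuousOn (fun Q => val Q g) (Set.Icc q' q) := by
    refine continuousOn_tsum (u := fun i : ℕ => (m : ℝ) / q' ^ (i + 1)) (fun i => ?_)
      (hasSum_top hq1 m).summable fun i x hx => ?_
    · refine ContinuousOn.div continuousOn_const (by fun_prop) fun x hx => ?_
      have : 0 < x := h0.trans_le hx.1
      positivity
    · have hx0 : 0 < x := h0.trans_le hx.1
      have h1 : (g i : ℝ) ≤ m := by exact_mod_cast hgl i
      have h2 := hx.1
      rw [Real.norm_of_nonneg (by positivity)]
      gcongr
  obtain ⟨Q, hQ, hQ1⟩ := intermediate_value_Icc' hq'2.le hcont ⟨hgq.le, hgq'.le⟩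
  have hQ1 : val Q g = 1 := hQ1
  have hQ0 : 1 < Q := hq1.trans_le hQ.1
  have hinf : ∀ k, ∃ i, 0 < g (k + i) := by
    intro k
    by_contra hcon
    obtain ⟨n, _, hn⟩ := (hlt k).2
    have h1 : g (k + n) = 0 := by by_contra h'; exact hcon ⟨n, by omega⟩
    have := hgl n
    simp only [cj, sh, h1] at hn
    omega
  refine ⟨Q, mem_UnivBases hQ0 (hqm.trans_le hQ.1) (hQ.2.trans hm') ⟨hgl, fun n _ => ?_,
    fun n _ => ?_⟩ hQ1, ?_⟩
  · refine parry hQ0 (sh_le hgl _) hgl hQ1 hinf fun k => ?_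
    rw [sh_sh]
    exact (hlt _).1 (by omega)
  · refine parry hQ0 (cj_le m _) hgl hQ1 hinf fun k => ?_
    change lexLt (cj m (sh k (sh (n + 1) g))) g
    rw [sh_sh]
    exact (hlt _).2
  · rw [Real.dist_eq, abs_of_nonneg (by linarith [hQ.2])]
    linarith [hQ.1]

/-! ### Closedness of the set of univoque sequences -/

/-- `c` is a coordinatewise limit of univoque sequences, univoque being expressed by `Good`. -/
def Close (m : ℕ) (q : ℝ) (c : ℕ → ℕ) : Prop :=
  ∀ N, ∃ e, Good m q e ∧ ∀ i, i < N → e i = c i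

lemma Close.le {m : ℕ} {q : ℝ} {c : ℕ → ℕ} (h : Close m q c) (i : ℕ) : c i ≤ m := by
  obtain ⟨e, he, hec⟩ := h (i + 1)
  rw [← hec i (by omega)]
  exact he.1 i

lemma Close.conj {m : ℕ} {q : ℝ} {c : ℕ → ℕ} (h : Close m q c) : Close m q (cj m c) := by
  intro N
  obtain ⟨e, he, hec⟩ := h N
  exact ⟨_, he.conj, fun i hi => by simp only [cj, hec i hi]⟩

lemma Close.tail_le {m : ℕ} {q : ℝ} (hq : 1 < q) {c : ℕ → ℕ} (h : Close m q c) (k : ℕ)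
    (hk : c k < m) : val q (sh (k + 1) c) ≤ 1 := by
  have h0 : 0 < q := by linarith
  have key : ∀ N : ℕ, val q (sh (k + 1) c) ≤ 1 + m / (q - 1) / q ^ N := by
    intro N
    obtain ⟨e, he, hec⟩ := h (k + 1 + N)
    have h1 := he.2.1 k (by rw [hec k (by omega)]; exact hk)
    rw [val_split hq (sh_le he.1 _) N] at h1
    rw [val_split hq (sh_le h.le _) N, Finset.sum_congr rfl (fun i hi => by
      rw [show sh (k + 1) c i = sh (k + 1) e i from
        (hec _ (by have := Finset.mem_range.1 hi; omega)).symm])]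
    have h2 : 0 ≤ val q (sh N (sh (k + 1) e)) / q ^ N :=
      div_nonneg (val_nonneg hq _) (by positivity)
    have h3 : val q (sh N (sh (k + 1) c)) / q ^ N ≤ m / (q - 1) / q ^ N :=
      div_le_div_of_nonneg_right (val_le hq (sh_le (sh_le h.le _) _)) (by positivity)
    linarith
  have ht : Filter.Tendsto (fun N : ℕ => 1 + m / (q - 1) / q ^ N) Filter.atTop
      (nhds (1 + 0)) :=
    ((tendsto_const_nhds).div_atTop (tendsto_pow_atTop_atTop_of_one_lt hq)).const_add 1
  rw [add_zero] at ht
  exact ge_of_tendsto' ht key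

/-- If strictness of a tail condition is lost in the limit, then that tail is an expansion of `1`
for which all the reflected conditions stay strict. -/
lemma Close.quasi {m : ℕ} {q : ℝ} (hq : 1 < q) {c : ℕ → ℕ} (h : Close m q c) (n : ℕ)
    (hn : c n < m) (h1 : val q (sh (n + 1) c) = 1) : Quasi m q (sh (n + 1) c) := by
  refine ⟨sh_le h.le _, h1, fun k hk => ?_, fun k hk => ?_⟩
  · rw [sh_sh]
    exact h.tail_le hq (n + 1 + k) hk
  · obtain ⟨e, he, hec⟩ := h (n + 1 + k + 1)
    have h2 := he.2.1 n (by rw [hec n (by omega)]; exact hn)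
    have hek : sh (n + 1) e k = sh (n + 1) c k := hec _ (by omega)
    have h3 := val_diff hq (sh_le he.1 (n + 1)) (sh_le h.le (n + 1)) k
      (fun i hi => hec _ (by omega))
    have h4 : val q (cj m (sh (k + 1) (sh (n + 1) e))) < 1 := by
      rw [sh_sh]
      exact he.2.2 (n + 1 + k) (by change 0 < sh (n + 1) e k; rwa [hek])
    rw [val_cj hq (sh_le (sh_le he.1 _) _)] at h4
    rw [val_cj hq (sh_le (sh_le h.le _) _)]
    rw [hek, h1, sub_self, zero_add] at h3
    have h5 : (val q (sh (n + 1) e) - 1) * q ^ (k + 1) < 0 :=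
      mul_neg_of_neg_of_pos (by linarith) (by have : 0 < q := by linarith
                                              positivity)
    linarith

lemma Close.good {m : ℕ} {q : ℝ} (hq : 1 < q) (hm : (m : ℝ) < q) (hm' : q ≤ m + 1)
    (hU : q ∉ closure UnivBases) {c : ℕ → ℕ} (h : Close m q c) : Good m q c := by
  refine ⟨h.le, fun n hn => ?_, fun n hn => ?_⟩
  · exact lt_of_le_of_ne (h.tail_le hq n hn) fun h1 =>
      hU ((h.quasi hq n hn h1).mem_closure hq hm hm')
  · have hn' : cj m c n < m := by have := h.le n; simp only [cj]; omega
    exact lt_of_le_of_ne (h.conj.tail_le hq n hn') fun h1 =>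
      hU ((h.conj.quasi hq n hn' h1).mem_closure hq hm hm')

lemma isClosed_good {m : ℕ} {q : ℝ} (hq : 1 < q) (hm : (m : ℝ) < q) (hm' : q ≤ m + 1)
    (hU : q ∉ closure UnivBases) : IsClosed {c | Good m q c} := by
  refine isClosed_of_closure_subset fun c hc => Close.good hq hm hm' hU fun N => ?_
  have ho : IsOpen ((Finset.range N : Set ℕ).pi fun i => ({c i} : Set ℕ)) :=
    isOpen_set_pi (Finset.finite_toSet _) fun i _ => isOpen_discrete _
  obtain ⟨e, he1, he2⟩ := mem_closure_iff.1 hc _ ho (fun i _ => rfl)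
  exact ⟨e, he2, fun i hi => he1 i (by simpa using hi)⟩

/-- Let `1 < q < r` with `⌈q⌉ = ⌈r⌉` and `q ∉ closure 𝒰`. Then the set
`𝒲_r = {x ∈ 𝒰_r : the unique expansion of x in base r belongs to 𝒰_q'}` is closed in `ℝ`. -/
theorem W_r_isClosed (q r : ℝ) (hq : 1 < q) (hqr : q < r) (hceil : ⌈q⌉ = ⌈r⌉)
    (hU : q ∉ closure UnivBases) :
    IsClosed {x : ℝ | x ∈ USet r ∧ ∀ c, IsExpansion r c x → c ∈ USeq q} := by

  set m : ℕ := ⌈q⌉.toNat - 1 with hmdef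
  have hr : 1 < r := hq.trans hqr
  have h2 : (1 : ℤ) < ⌈q⌉ := Int.lt_ceil.2 (by simpa using hq)
  have hmz : (⌈q⌉ : ℤ) = m + 1 := by omega
  have hmR : ((⌈q⌉ : ℤ) : ℝ) = m + 1 := by rw [hmz]; push_cast; rfl
  have hq1 : (m : ℝ) < q := by have := Int.ceil_lt_add_one q; linarith
  have hq2 : q ≤ m + 1 := by have := Int.le_ceil q; linarith
  have hr1 : (m : ℝ) < r := hq1.trans hqr
  have hr2 : r ≤ m + 1 := by have := Int.le_ceil r; rw [← hceil] at this; linarith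
  -- A univoque sequence in base `q` is univoque in base `r`, as values decrease with the base.
  have hqr' : ∀ c, Good m q c → Good m r c := fun c hc =>
    ⟨hc.1, fun n hn => (val_le_of_base_le hq hqr.le (sh_le hc.1 _)).trans_lt (hc.2.1 n hn),
      fun n hn => (val_le_of_base_le hq hqr.le (cj_le m _)).trans_lt (hc.2.2 n hn)⟩
  have himage : {x : ℝ | x ∈ USet r ∧ ∀ c, IsExpansion r c x → c ∈ USeq q} =
      val r '' {c | Good m q c} := by
    ext x
    simp only [Set.mem_ofPred_eq, USet, isExpansion_iff hr1 hr2, mem_USeq_iff hq hq1 hq2,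
      Set.mem_image]
    constructor
    · rintro ⟨⟨_, c, hc, _⟩, hall⟩
      exact ⟨c, hall c hc, hc.2⟩
    · rintro ⟨c, hc, rfl⟩
      refine ⟨⟨⟨val_nonneg hr c, ?_⟩, c, ⟨hc.1, rfl⟩, fun c' hc' =>
        (hqr' c hc).unique hr hc'.1 hc'.2⟩, fun c' hc' => ?_⟩
      · rw [← hceil, hmR, add_sub_cancel_right]
        exact val_le hr hc.1
      · rwa [(hqr' c hc).unique hr hc'.1 hc'.2]
  rw [himage]
  have hcomp : IsCompact {c | Good m q c} :=
    (isCompact_univ_pi fun _ : ℕ => (Set.finite_Iic m).isCompact).of_isClosed_subset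
      (isClosed_good hq hq1 hq2 hU) fun c hc i _ => hc.1 i
  refine (hcomp.image_of_continuousOn ?_).isClosed
  refine continuousOn_tsum (u := fun i : ℕ => (m : ℝ) / r ^ (i + 1)) (fun i => ?_)
    (hasSum_top hr m).summable fun i c hc => ?_
  · exact ((continuous_of_discreteTopology (f := fun k : ℕ => (k : ℝ) / r ^ (i + 1))).comp
      (continuous_apply i)).continuousOn
  · have h0 : 0 < r := by linarith
    have h1 : (c i : ℝ) ≤ m := by exact_mod_cast hc.1 i
    rw [Real.norm_of_nonneg (by positivity)]
    gcongr
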